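/- Let S be a 2^n-periodic binary sequence and 0 ≤ k ≤ 2^n. Suppose 2^n - 2^s < L_k(S) < 2^n - 2^{s-1} for some integer s with 1 ≤ s ≤ n. Then there exists an integer m with m ≤ k and a 2^n-periodic binary sequence E of Hamming weight m whose support is contained in {0, 1, ..., 2^s - 1}, such that L(S + E) = L_k(S). -/

import Mathlib

/-- Generating polynomial `S^N(x) = s_0 + s_1 x + ... + s_{N-1} x^{N-1}` of one period
of an `N`-periodic binary sequence. -/
noncomputable def genPoly {N : ℕ} (S : Fin N → ZMod 2) : Polynomial (ZMod 2) :=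
  ∑ i : Fin N, Polynomial.C (S i) * Polynomial.X ^ (i : ℕ)

/-- Linear complexity `L(S) = N - deg (gcd (1 - x^N, S^N(x)))`. -/
noncomputable def linComp {N : ℕ} (S : Fin N → ZMod 2) : ℕ :=
  N - (EuclideanDomain.gcd (1 - Polynomial.X ^ N) (genPoly S)).natDegree

/-- Hamming weight of one period of an `N`-periodic binary sequence. -/
def wt {N : ℕ} (T : Fin N → ZMod 2) : ℕ :=
  (Finset.univ.filter (fun i => T i ≠ 0)).card

/-- `k`-error linear complexity `L_{N,k}(S)`. -/
noncomputable def errLC {N : ℕ} (S : Fin N → ZMod 2) (k : ℕ) : ℕ :=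
  sInf {c | ∃ T : Fin N → ZMod 2, wt T ≤ k ∧ linComp (S + T) = c}

/-- `k`-error linear complexity with a zone of length `Z`: `L_{N,k;Z}(S)`. -/
noncomputable def errLCZone {N : ℕ} (S : Fin N → ZMod 2) (k Z : ℕ) : ℕ :=
  sInf {c | ∃ T : Fin N → ZMod 2, wt T ≤ k ∧ (∀ i : Fin N, Z ≤ (i : ℕ) → T i = 0) ∧
    linComp (S + T) = c}

/-- `E_1(j)`: the sequence whose only nonzero term in one period is a `1` at position `j`. -/
def E1 {N : ℕ} (j : Fin N) : Fin N → ZMod 2 :=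
  fun i => if i = j then 1 else 0

/-!
By the Frobenius, `1 - X ^ 2 ^ n = (X - 1) ^ 2 ^ n` over `ZMod 2`, so `linComp S` only measures the
multiplicity of the root `1` in `genPoly S`, capped at `2 ^ n`. Reducing all positions of an error
vector modulo `2 ^ s` never increases its weight and changes `genPoly` by a multiple of
`1 - X ^ 2 ^ s = (X - 1) ^ 2 ^ s`. This leaves every multiplicity below `2 ^ s` unchanged, and
`2 ^ n - 2 ^ s < linComp S` says exactly that the multiplicity is below `2 ^ s`.
-/

open Polynomial

theorem one_sub_pow_dvd_pow_sub_pow_mod {R : Type*} [CommRing R] (x : R) (M j : ℕ) :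
    1 - x ^ M ∣ x ^ j - x ^ (j % M) := by
  have split_pow : x ^ j - x ^ (j % M) = -x ^ (j % M) * (1 - (x ^ M) ^ (j / M)) := by
    nth_rw 1 [← Nat.mod_add_div j M]
    rw [pow_add, pow_mul]
    ring
  rw [split_pow]
  exact (one_sub_dvd_one_sub_pow (x ^ M) (j / M)).mul_left _

theorem one_sub_X_pow_two_pow {R : Type*} [CommRing R] [CharP R 2] (t : ℕ) :
    (1 - X ^ 2 ^ t : R[X]) = (X - C 1) ^ 2 ^ t := by
  rw [sub_pow_char_pow, ← C_pow, one_pow, C_1, CharTwo.sub_eq_add, CharTwo.sub_eq_add, add_comm]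

section GcdWithLinearPower

variable {K : Type*} [Field K] [DecidableEq K]

theorem le_natDegree_gcd_X_sub_C_pow_iff (a : K) (N c : ℕ) (Q : K[X]) :
    c ≤ (EuclideanDomain.gcd ((X - C a) ^ N) Q).natDegree ↔ c ≤ N ∧ (X - C a) ^ c ∣ Q := by
  have hprime : Prime (X - C a) := prime_X_sub_C a
  have pow_dvd_iff (i j : ℕ) : (X - C a) ^ i ∣ (X - C a) ^ j ↔ i ≤ j :=
    pow_dvd_pow_iff hprime.ne_zero hprime.not_isUnit
  obtain ⟨e, -, he⟩ := (dvd_prime_pow hprime N).1 (EuclideanDomain.gcd_dvd_left ((X - C a) ^ N) Q)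
  have natDegree_gcd : (EuclideanDomain.gcd ((X - C a) ^ N) Q).natDegree = e := by
    rw [natDegree_eq_of_degree_eq (degree_eq_degree_of_associated he), natDegree_pow,
      natDegree_X_sub_C, mul_one]
  rw [natDegree_gcd, ← pow_dvd_iff c e, ← he.dvd_iff_dvd_right, ← pow_dvd_iff c N]
  exact ⟨fun h => ⟨h.trans (EuclideanDomain.gcd_dvd_left _ _),
    h.trans (EuclideanDomain.gcd_dvd_right _ _)⟩, fun h => EuclideanDomain.dvd_gcd h.1 h.2⟩

theorem natDegree_gcd_X_sub_C_pow_congr {a : K} {N M : ℕ} {A B : K[X]}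
    (hAB : (X - C a) ^ M ∣ A - B)
    (hA : (EuclideanDomain.gcd ((X - C a) ^ N) A).natDegree < M) :
    (EuclideanDomain.gcd ((X - C a) ^ N) A).natDegree =
      (EuclideanDomain.gcd ((X - C a) ^ N) B).natDegree := by
  have le_iff_le {c : ℕ} (hc : c ≤ M) :
      c ≤ (EuclideanDomain.gcd ((X - C a) ^ N) A).natDegree ↔
        c ≤ (EuclideanDomain.gcd ((X - C a) ^ N) B).natDegree := by
    rw [le_natDegree_gcd_X_sub_C_pow_iff, le_natDegree_gcd_X_sub_C_pow_iff,
      dvd_iff_dvd_of_dvd_sub ((pow_dvd_pow _ hc).trans hAB)]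
  exact le_antisymm ((le_iff_le hA.le).1 le_rfl)
    (not_lt.1 fun hlt => Nat.lt_irrefl _ ((le_iff_le hA).2 hlt))

end GcdWithLinearPower

theorem genPoly_add {N : ℕ} (S T : Fin N → ZMod 2) :
    genPoly (S + T) = genPoly S + genPoly T := by
  simp [genPoly, add_mul, Finset.sum_add_distrib]

theorem linComp_eq_of_one_sub_X_pow_dvd {n s : ℕ} {S T : Fin (2 ^ n) → ZMod 2}
    (hST : 1 - X ^ 2 ^ s ∣ genPoly S - genPoly T) (hS : 2 ^ n < linComp S + 2 ^ s) :
    linComp S = linComp T := by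
  unfold linComp at hS ⊢
  rw [one_sub_X_pow_two_pow] at hST hS ⊢
  have natDegree_le :
      (EuclideanDomain.gcd ((X - C 1) ^ 2 ^ n) (genPoly S)).natDegree ≤ 2 ^ n :=
    ((le_natDegree_gcd_X_sub_C_pow_iff _ _ _ _).1 le_rfl).1
  rw [natDegree_gcd_X_sub_C_pow_congr hST (by lia)]

theorem exists_wt_le_linComp_eq_errLC {N : ℕ} (S : Fin N → ZMod 2) (k : ℕ) :
    ∃ T : Fin N → ZMod 2, wt T ≤ k ∧ linComp (S + T) = errLC S k :=
  Nat.sInf_mem (s := {c | ∃ T : Fin N → ZMod 2, wt T ≤ k ∧ linComp (S + T) = c})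
    ⟨_, 0, by simp [wt], rfl⟩

section Folding

variable {N : ℕ}

/-- The position to which folding modulo `M` moves `j`, namely the residue `j % M` as an element of
`Fin N`; for `M = 0` it is `j` itself. -/
def modIndex (M : ℕ) (j : Fin N) : Fin N :=
  ⟨j % M, (Nat.mod_le _ _).trans_lt j.isLt⟩

/-- The folding of a sequence modulo `M`: all terms whose positions agree modulo `M` are added up
at the position of their common residue. It moves the support of an error vector into `[0, M)`
while keeping the period `N`, so that the result can be added to a sequence of period `N`. -/
def foldMod {R : Type*} [AddCommMonoid R] (M : ℕ) (T : Fin N → R) : Fin N → R :=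
  fun i => ∑ j with modIndex M j = i, T j

theorem exists_modIndex_eq_of_foldMod_ne_zero {R : Type*} [AddCommMonoid R] {M : ℕ}
    {T : Fin N → R} {i : Fin N} (hi : foldMod M T i ≠ 0) : ∃ j, T j ≠ 0 ∧ modIndex M j = i := by
  obtain ⟨j, hj, hTj⟩ := Finset.exists_ne_zero_of_sum_ne_zero hi
  exact ⟨j, hTj, (Finset.mem_filter.1 hj).2⟩

theorem lt_of_foldMod_ne_zero {R : Type*} [AddCommMonoid R] {M : ℕ} (hM : 0 < M)
    {T : Fin N → R} {i : Fin N} (hi : foldMod M T i ≠ 0) : (i : ℕ) < M := by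
  obtain ⟨j, -, rfl⟩ := exists_modIndex_eq_of_foldMod_ne_zero hi
  exact Nat.mod_lt _ hM

theorem wt_foldMod_le (M : ℕ) (T : Fin N → ZMod 2) : wt (foldMod M T) ≤ wt T := by
  have support_subset : ({i | foldMod M T i ≠ 0} : Finset (Fin N)) ⊆
      ({j | T j ≠ 0} : Finset (Fin N)).image (modIndex M) := fun i hi => by
    obtain ⟨j, hTj, hji⟩ := exists_modIndex_eq_of_foldMod_ne_zero (Finset.mem_filter.1 hi).2
    exact Finset.mem_image.2 ⟨j, Finset.mem_filter.2 ⟨Finset.mem_univ j, hTj⟩, hji⟩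
  exact (Finset.card_le_card support_subset).trans Finset.card_image_le

theorem genPoly_foldMod (M : ℕ) (T : Fin N → ZMod 2) :
    genPoly (foldMod M T) = ∑ j, C (T j) * X ^ (j % M : ℕ) := by
  refine Eq.trans ?_ (Finset.sum_fiberwise _ (modIndex M) _)
  refine Finset.sum_congr rfl fun i _ => ?_
  rw [foldMod, map_sum, Finset.sum_mul]
  refine Finset.sum_congr rfl fun j hj => ?_
  rw [← (Finset.mem_filter.1 hj).2, modIndex]

theorem one_sub_X_pow_dvd_genPoly_sub_foldMod (M : ℕ) (T : Fin N → ZMod 2) :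
    1 - X ^ M ∣ genPoly T - genPoly (foldMod M T) := by
  rw [genPoly_foldMod, genPoly, ← Finset.sum_sub_distrib]
  refine Finset.dvd_sum fun j _ => ?_
  rw [← mul_sub]
  exact (one_sub_pow_dvd_pow_sub_pow_mod X M j).mul_left _

end Folding

theorem stmt6_general (n k s : ℕ) (S : Fin (2 ^ n) → ZMod 2)
    (hL : 2 ^ n < errLC S k + 2 ^ s) :
    ∃ E : Fin (2 ^ n) → ZMod 2, wt E ≤ k ∧ (∀ i : Fin (2 ^ n), E i ≠ 0 → (i : ℕ) < 2 ^ s) ∧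
      linComp (S + E) = errLC S k := by
  obtain ⟨T, hwt, hT⟩ := exists_wt_le_linComp_eq_errLC S k
  have hdvd : 1 - X ^ 2 ^ s ∣ genPoly (S + T) - genPoly (S + foldMod (2 ^ s) T) := by
    rw [genPoly_add, genPoly_add, add_sub_add_left_eq_sub]
    exact one_sub_X_pow_dvd_genPoly_sub_foldMod (2 ^ s) T
  refine ⟨foldMod (2 ^ s) T, (wt_foldMod_le _ T).trans hwt,
    fun i => lt_of_foldMod_ne_zero (Nat.two_pow_pos s), ?_⟩
  rw [← hT] at hL ⊢
  exact (linComp_eq_of_one_sub_X_pow_dvd hdvd hL).symm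

/-- If `2^n - 2^s < L_k(S) < 2^n - 2^{s-1}`, then there exists an error vector of
weight `m ≤ k` with support in `[0, 2^s)` reaching `L_k(S)`. -/
theorem stmt6 (n k s : ℕ) (hk : k ≤ 2^n) (hs1 : 1 ≤ s) (hsn : s ≤ n)
    (S : Fin (2^n) → ZMod 2)
    (h1 : 2^n - 2^s < errLC S k) (h2 : errLC S k < 2^n - 2^(s-1)) :
    ∃ m ≤ k, ∃ E : Fin (2^n) → ZMod 2, wt E = m ∧
      (∀ i : Fin (2^n), E i ≠ 0 → (i : ℕ) < 2^s) ∧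
      linComp (S + E) = errLC S k := by
  obtain ⟨E, hwt, hsupp, hE⟩ := stmt6_general n k s S (by lia)
  exact ⟨wt E, hwt, E, rfl, hsupp, hE⟩
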